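/- For every prime number q ∉ {5, 41, 61} that is a quadratic residue modulo 41 and modulo 61 but a quadratic non-residue modulo 5: (2501, q) = 0 and (5, q) ≠ 0 in Br(ℚ), where 2501 = 41·61. -/

import Mathlib

/-!
For the first assertion, `ℍ[ℚ, a, b]` is split as soon as `x² = a y² + b z²` has a solution with
`z ≠ 0`: then `b = u² - a v²` is a norm from `ℚ(√a)`, and `i ↦ [[0, a], [1, 0]]`,
`j ↦ [[u, -a v], [v, -u]]` is an explicit isomorphism onto `M₂(ℚ)` (`quatSplit_of_norm`).
The solution is the easy case of Legendre's theorem (`exists_legendre`): if `a` is a square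
modulo `b` and `b` a square modulo `a`, the pigeonhole principle applied to the box
`0 ≤ x ≤ √(ab)`, `0 ≤ y ≤ √b`, `0 ≤ z ≤ √a` gives a nonzero `(x, y, z)` for which
`x² - a y² - b z²` is a multiple of `a b` lying strictly between `-2ab` and `ab`, hence `0` or
`-ab`; an identity turns the second case into the first. For `a = 2501` and `b = q` the residue
conditions are the hypotheses and quadratic reciprocity (`41 ≡ 61 ≡ 1 mod 4`).

For the second assertion, a splitting produces a nonzero quaternion of square zero, which has to be
pure, so `5 x² + q y² = 5 q z²` has a nontrivial rational solution. Descent at the prime `5`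
(`descent_five`) excludes this because `q` is not a square modulo `5`.
-/

open Quaternion

/-- Triviality of the quaternion Brauer class `(a,b)` in `Br(ℚ)`: the class `(a,b)` is
zero iff the quaternion algebra is split, i.e. isomorphic to `M₂(ℚ)`. -/
def quatSplit (a b : ℚ) : Prop :=
  Nonempty (ℍ[ℚ, a, b] ≃ₐ[ℚ] Matrix (Fin 2) (Fin 2) ℚ)

/-! ### Legendre's theorem by pigeonhole -/

/-- A nonzero integer vector in the box on which the form `x² - a y² - b z²` is divisible by both
`a` and `b`. -/
lemma exists_small (a b : ℕ) (ha : 0 < a) (hb : 0 < b)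
    (hab : IsSquare (a : ZMod b)) (hba : IsSquare (b : ZMod a)) :
    ∃ x y z : ℤ, ¬ (x = 0 ∧ y = 0 ∧ z = 0) ∧ x ^ 2 ≤ a * b ∧ y ^ 2 ≤ b ∧ z ^ 2 ≤ a ∧
      (b : ℤ) ∣ x ^ 2 - a * y ^ 2 - b * z ^ 2 ∧ (a : ℤ) ∣ x ^ 2 - a * y ^ 2 - b * z ^ 2 := by
  have : NeZero a := ⟨ha.ne'⟩
  have : NeZero b := ⟨hb.ne'⟩
  obtain ⟨r, hr⟩ := hab
  obtain ⟨s, hs⟩ := hba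
  let f : Fin ((a * b).sqrt + 1) × Fin (b.sqrt + 1) × Fin (a.sqrt + 1) → ZMod b × ZMod a :=
    fun p => (((p.1 : ℕ) : ZMod b) - r * ((p.2.1 : ℕ) : ZMod b),
      ((p.1 : ℕ) : ZMod a) - s * ((p.2.2 : ℕ) : ZMod a))
  have hcard : Fintype.card (ZMod b × ZMod a) <
      Fintype.card (Fin ((a * b).sqrt + 1) × Fin (b.sqrt + 1) × Fin (a.sqrt + 1)) := by
    simp only [Fintype.card_prod, ZMod.card, Fintype.card_fin]
    have h1 := Nat.lt_succ_sqrt' (a * b)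
    have h2 := Nat.lt_succ_sqrt' b
    have h3 := Nat.lt_succ_sqrt' a
    simp only [Nat.succ_eq_add_one] at h1 h2 h3
    -- compare squares: `(ab)² = (ab) · b · a`
    have h : (b * a) ^ 2 < (((a * b).sqrt + 1) * ((b.sqrt + 1) * (a.sqrt + 1))) ^ 2 := by
      calc (b * a) ^ 2 = (a * b) * (b * a) := by ring
        _ < ((a * b).sqrt + 1) ^ 2 * ((b.sqrt + 1) ^ 2 * (a.sqrt + 1) ^ 2) := by gcongr
        _ = _ := by ring
    exact lt_of_pow_lt_pow_left₀ 2 (Nat.zero_le _) h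
  obtain ⟨p, p', hne, hf⟩ := Fintype.exists_ne_map_eq_of_card_lt f hcard
  obtain ⟨x, y, z⟩ := p
  obtain ⟨x', y', z'⟩ := p'
  simp only [f, Prod.mk.injEq] at hf
  obtain ⟨hf1, hf2⟩ := hf
  have key : ∀ (n : ℕ) (u v : Fin (n.sqrt + 1)), (((u : ℕ) : ℤ) - ((v : ℕ) : ℤ)) ^ 2 ≤ n := by
    intro n u v
    have hu : ((u : ℕ) : ℤ) ≤ n.sqrt := by exact_mod_cast Nat.lt_succ_iff.mp u.2
    have hv : ((v : ℕ) : ℤ) ≤ n.sqrt := by exact_mod_cast Nat.lt_succ_iff.mp v.2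
    have hn : ((n.sqrt : ℕ) : ℤ) ^ 2 ≤ n := by exact_mod_cast Nat.sqrt_le' n
    refine le_trans (sq_le_sq' ?_ ?_) hn <;> omega
  refine ⟨(x : ℕ) - (x' : ℕ), (y : ℕ) - (y' : ℕ), (z : ℕ) - (z' : ℕ), ?_, ?_, key _ _ _, key _ _ _,
    ?_, ?_⟩
  · rintro ⟨h1, h2, h3⟩
    apply hne
    simp only [Prod.mk.injEq, Fin.ext_iff]
    omega
  · exact_mod_cast key _ x x'
  · rw [← ZMod.intCast_zmod_eq_zero_iff_dvd]
    push_cast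
    rw [ZMod.natCast_self, hr]
    linear_combination (((x : ℕ) - (x' : ℕ) : ZMod b) + r * ((y : ℕ) - (y' : ℕ) : ZMod b)) * hf1
  · rw [← ZMod.intCast_zmod_eq_zero_iff_dvd]
    push_cast
    rw [ZMod.natCast_self, hs]
    linear_combination (((x : ℕ) - (x' : ℕ) : ZMod a) + s * ((z : ℕ) - (z' : ℕ) : ZMod a)) * hf2

lemma exists_legendre (a b : ℕ) (ha : 0 < a) (hb : 0 < b) (hcop : Nat.Coprime a b)
    (hsb : ¬ IsSquare (b : ℤ)) (hsab : ¬ IsSquare ((a : ℤ) * b))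
    (hab : IsSquare (a : ZMod b)) (hba : IsSquare (b : ZMod a)) :
    ∃ x y z : ℤ, ¬ (x = 0 ∧ y = 0 ∧ z = 0) ∧ x ^ 2 = a * y ^ 2 + b * z ^ 2 := by
  obtain ⟨x, y, z, hne, hx, hy, hz, hdb, hda⟩ := exists_small a b ha hb hab hba
  have hx' : x ^ 2 < a * b := lt_of_le_of_ne hx fun h => hsab ⟨x, by rw [← h]; ring⟩
  have hy' : y ^ 2 < b := lt_of_le_of_ne hy fun h => hsb ⟨y, by rw [← h]; ring⟩
  have hd : (a : ℤ) * b ∣ x ^ 2 - a * y ^ 2 - b * z ^ 2 :=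
    IsCoprime.mul_dvd (Nat.isCoprime_iff_coprime.mpr hcop) hda hdb
  obtain ⟨m, hm⟩ := hd
  have ha' : (0 : ℤ) < a := by exact_mod_cast ha
  have hb' : (0 : ℤ) < b := by exact_mod_cast hb
  have hpos : (0 : ℤ) < a * b := mul_pos ha' hb'
  have e1 : (a : ℤ) * y ^ 2 < a * b := by gcongr
  have e2 : (b : ℤ) * z ^ 2 ≤ b * a := by gcongr
  have e3 : (0 : ℤ) ≤ a * y ^ 2 := by positivity
  have e4 : (0 : ℤ) ≤ b * z ^ 2 := by positivity
  have hm1 : m < 1 := by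
    by_contra! h
    nlinarith [sq_nonneg x]
  have hm2 : -2 < m := by
    by_contra! h
    nlinarith [sq_nonneg x]
  obtain rfl | rfl : m = 0 ∨ m = -1 := by omega
  · exact ⟨x, y, z, hne, by linarith⟩
  -- if `x² + ab = a y² + b z²`, then
  -- `(x² + ab)² = (a y² + b z²)(x² + ab) = a (x y + b z)² + b (x z - a y)²`
  · refine ⟨x ^ 2 + a * b, x * y + b * z, x * z - a * y, ?_, ?_⟩
    · rintro ⟨h, -, -⟩
      nlinarith [sq_nonneg x]
    · have h : (a : ℤ) * y ^ 2 + b * z ^ 2 = x ^ 2 + a * b := by linarith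
      linear_combination (-(x ^ 2 + a * b : ℤ)) * h

/-! ### The splitting criterion -/

/-- The quaternionic basis `i = [[0, a], [1, 0]]`, `j = [[u, -a v], [v, -u]]` of `M₂(ℚ)`, with
`j² = u² - a v²`. -/
def normBasis (a b u v : ℚ) (h : u ^ 2 - a * v ^ 2 = b) :
    QuaternionAlgebra.Basis (Matrix (Fin 2) (Fin 2) ℚ) a 0 b where
  i := !![0, a; 1, 0]
  j := !![u, -a * v; v, -u]
  k := !![a * v, -a * u; u, -a * v]
  i_mul_i := by
    ext i j; fin_cases i <;> fin_cases j <;> simp [Matrix.mul_apply, Fin.sum_univ_two]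
  j_mul_j := by
    subst h
    ext i j; fin_cases i <;> fin_cases j <;> simp [Matrix.mul_apply, Fin.sum_univ_two] <;> ring
  i_mul_j := by
    ext i j; fin_cases i <;> fin_cases j <;> simp [Matrix.mul_apply, Fin.sum_univ_two]
  j_mul_i := by
    ext i j; fin_cases i <;> fin_cases j <;> simp [Matrix.mul_apply, Fin.sum_univ_two] <;> ring

lemma quatSplit_of_norm (a b u v : ℚ) (ha : a ≠ 0) (hb : b ≠ 0) (h : u ^ 2 - a * v ^ 2 = b) :
    quatSplit a b := by
  let φ : ℍ[ℚ, a, b] →ₐ[ℚ] Matrix (Fin 2) (Fin 2) ℚ := (normBasis a b u v h).liftHom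
  have hinj : Function.Injective φ := by
    rw [injective_iff_map_eq_zero]
    intro w hw
    have hw' : (normBasis a b u v h).lift w = 0 := hw
    simp only [QuaternionAlgebra.Basis.lift, normBasis] at hw'
    have e00 := congrFun (congrFun hw' 0) 0
    have e01 := congrFun (congrFun hw' 0) 1
    have e10 := congrFun (congrFun hw' 1) 0
    have e11 := congrFun (congrFun hw' 1) 1
    simp [Matrix.algebraMap_matrix_apply] at e00 e01 e10 e11
    have hr : w.re = 0 := by linear_combination (e00 + e11) / 2
    have hi : w.imI = 0 := by
      have : a * w.imI = 0 := by linear_combination (e01 + a * e10) / 2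
      exact (mul_eq_zero.mp this).resolve_left ha
    have hj : w.imJ = 0 := by
      have : b * w.imJ = 0 := by
        linear_combination u * (e00 - hr) - a * v * (e10 - hi) - w.imJ * h
      exact (mul_eq_zero.mp this).resolve_left hb
    have hk : w.imK = 0 := by
      have : b * w.imK = 0 := by
        linear_combination u * (e10 - hi) - v * (e00 - hr) - w.imK * h
      exact (mul_eq_zero.mp this).resolve_left hb
    ext <;> simp [hr, hi, hj, hk]
  have hfr : Module.finrank ℚ ℍ[ℚ, a, b] = Module.finrank ℚ (Matrix (Fin 2) (Fin 2) ℚ) := by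
    rw [QuaternionAlgebra.finrank_eq_four, Module.finrank_matrix]
    simp
  have hsurj : Function.Surjective φ :=
    (LinearMap.injective_iff_surjective_of_finrank_eq_finrank (f := φ.toLinearMap) hfr).mp hinj
  exact ⟨AlgEquiv.ofBijective φ ⟨hinj, hsurj⟩⟩

lemma quatSplit_of_legendre (a b : ℕ) (hb : 0 < b) (hsa : ¬ IsSquare (a : ℚ))
    (h : ∃ x y z : ℤ, ¬ (x = 0 ∧ y = 0 ∧ z = 0) ∧ x ^ 2 = a * y ^ 2 + b * z ^ 2) :
    quatSplit a b := by
  obtain ⟨x, y, z, hne, he⟩ := h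
  have he' : (x : ℚ) ^ 2 = a * y ^ 2 + b * z ^ 2 := by exact_mod_cast he
  have ha : (a : ℚ) ≠ 0 := fun h0 => hsa (h0 ▸ IsSquare.zero)
  have hz : (z : ℚ) ≠ 0 := by
    intro hz
    have hy : (y : ℚ) ≠ 0 := by
      intro hy
      apply hne
      rw [hz, hy] at he'
      have hx : (x : ℚ) = 0 := by simpa using he'
      exact_mod_cast And.intro hx (And.intro hy hz)
    apply hsa
    refine ⟨x / y, ?_⟩
    rw [hz] at he'
    field_simp
    linarith
  refine quatSplit_of_norm a b (x / z) (y / z) ha (by exact_mod_cast hb.ne') ?_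
  field_simp
  linarith

/-! ### Non-splitting at the prime 5 -/

lemma five_dvd_of_sq (q : ℕ) (hn : ¬ IsSquare (q : ZMod 5)) (x z : ℤ)
    (h : (5 : ℤ) ∣ x ^ 2 - q * z ^ 2) : (5 : ℤ) ∣ x ∧ (5 : ℤ) ∣ z := by
  have : Fact (Nat.Prime 5) := ⟨by norm_num⟩
  have h' : ((x ^ 2 - q * z ^ 2 : ℤ) : ZMod 5) = 0 :=
    (ZMod.intCast_zmod_eq_zero_iff_dvd _ 5).mpr (by exact_mod_cast h)
  push_cast at h'
  have hz : (z : ZMod 5) = 0 := by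
    by_contra hz
    apply hn
    refine ⟨x / z, ?_⟩
    field_simp
    linear_combination -h'
  have hx : (x : ZMod 5) = 0 := by
    rw [hz] at h'
    simpa using h'
  exact ⟨by exact_mod_cast (ZMod.intCast_zmod_eq_zero_iff_dvd _ 5).mp hx,
    by exact_mod_cast (ZMod.intCast_zmod_eq_zero_iff_dvd _ 5).mp hz⟩

lemma descent_five (q : ℕ) (hn : ¬ IsSquare (q : ZMod 5)) :
    ∀ (n : ℕ) (x y z : ℤ), x.natAbs + y.natAbs + z.natAbs ≤ n →
      5 * x ^ 2 + q * y ^ 2 = 5 * q * z ^ 2 → x = 0 ∧ y = 0 ∧ z = 0 := by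
  intro n
  induction n with
  | zero => intro x y z h _; omega
  | succ n ih =>
    intro x y z hle h
    -- `5 ∣ 0² - q y²` gives `5 ∣ y`
    obtain ⟨-, y', rfl⟩ := five_dvd_of_sq q hn 0 y ⟨x ^ 2 - q * z ^ 2, by linarith⟩
    obtain ⟨⟨x', rfl⟩, z', rfl⟩ := five_dvd_of_sq q hn x z ⟨-(q * y' ^ 2), by linarith⟩
    by_cases h0 : x' = 0 ∧ y' = 0 ∧ z' = 0
    · obtain ⟨rfl, rfl, rfl⟩ := h0
      simp
    · obtain ⟨h1, h2, h3⟩ := ih x' y' z' (by omega) (by linarith)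
      exact absurd ⟨h1, h2, h3⟩ h0

lemma descent_five_rat (q : ℕ) (hn : ¬ IsSquare (q : ZMod 5)) (x y z : ℚ)
    (h : 5 * x ^ 2 + q * y ^ 2 = 5 * q * z ^ 2) : x = 0 ∧ y = 0 ∧ z = 0 := by
  have hx := x.num_div_den
  have hy := y.num_div_den
  have hz := z.num_div_den
  have dx : (x.den : ℚ) ≠ 0 := by exact_mod_cast x.den_ne_zero
  have dy : (y.den : ℚ) ≠ 0 := by exact_mod_cast y.den_ne_zero
  have dz : (z.den : ℚ) ≠ 0 := by exact_mod_cast z.den_ne_zero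
  have e : 5 * (x.num * (y.den * z.den) : ℤ) ^ 2 + q * (y.num * (x.den * z.den) : ℤ) ^ 2
      = 5 * q * (z.num * (x.den * y.den) : ℤ) ^ 2 := by
    rw [← hx, ← hy, ← hz] at h
    field_simp at h
    have h' : 5 * (x.num * (y.den * z.den) : ℚ) ^ 2 + q * (y.num * (x.den * z.den) : ℚ) ^ 2
      = 5 * q * (z.num * (x.den * y.den) : ℚ) ^ 2 := by linarith
    exact_mod_cast h'
  obtain ⟨h1, h2, h3⟩ := descent_five q hn _ _ _ _ le_rfl e
  simpa using And.intro h1 (And.intro h2 h3)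

lemma not_quatSplit_five (q : ℕ) (hn : ¬ IsSquare (q : ZMod 5)) : ¬ quatSplit 5 (q : ℚ) := by
  rintro ⟨e⟩
  obtain ⟨w, hw⟩ := e.surjective !![0, 1; 0, 0]
  have hw0 : w ≠ 0 := by
    rintro rfl
    have := congrFun (congrFun hw 0) 1
    simp at this
  have hsq : w * w = 0 := by
    apply e.injective
    rw [map_mul, hw, map_zero]
    ext i j; fin_cases i <;> fin_cases j <;> simp
  have er := congrArg QuaternionAlgebra.re hsq
  have ei := congrArg QuaternionAlgebra.imI hsq
  have ej := congrArg QuaternionAlgebra.imJ hsq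
  have ek := congrArg QuaternionAlgebra.imK hsq
  simp at er ei ej ek
  have hi : w.re * w.imI = 0 := by linear_combination ei / 2
  have hj : w.re * w.imJ = 0 := by linear_combination ej / 2
  have hk : w.re * w.imK = 0 := by linear_combination ek / 2
  have hr : w.re = 0 := by
    by_contra hr
    have hi := (mul_eq_zero.mp hi).resolve_left hr
    have hj := (mul_eq_zero.mp hj).resolve_left hr
    have hk := (mul_eq_zero.mp hk).resolve_left hr
    rw [hi, hj, hk] at er
    exact hr (by simpa using er)
  obtain ⟨h1, h2, h3⟩ := descent_five_rat q hn w.imI w.imJ w.imK (by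
    rw [hr] at er
    linear_combination er)
  exact hw0 (by ext <;> simp [hr, h1, h2, h3])

/-- for every prime `q ∉ {5,41,61}` that is a quadratic residue mod 41 and
mod 61 but a quadratic non-residue mod 5, one has `(2501,q) = 0` and `(5,q) ≠ 0` in
`Br(ℚ)`, where `2501 = 41·61`. -/
theorem stmt18 (q : ℕ) (hq : q.Prime) (h5 : q ≠ 5) (h41 : q ≠ 41) (h61 : q ≠ 61)
    (hr41 : IsSquare (q : ZMod 41)) (hr61 : IsSquare (q : ZMod 61))
    (hn5 : ¬ IsSquare (q : ZMod 5)) :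
    quatSplit 2501 (q : ℚ) ∧ ¬ quatSplit 5 (q : ℚ) := by
  refine ⟨?_, not_quatSplit_five q hn5⟩
  have : Fact q.Prime := ⟨hq⟩
  have : Fact (Nat.Prime 41) := ⟨by norm_num⟩
  have : Fact (Nat.Prime 61) := ⟨by norm_num⟩
  -- `61 ≡ 5 mod 8`, so `2` is not a square modulo `61`
  have h2 : q ≠ 2 := by
    rintro rfl
    revert hr61
    decide
  have hs41 : IsSquare ((41 : ℕ) : ZMod q) :=
    (ZMod.exists_sq_eq_prime_iff_of_mod_four_eq_one (p := 41) (by norm_num) h2).mp hr41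
  have hs61 : IsSquare ((61 : ℕ) : ZMod q) :=
    (ZMod.exists_sq_eq_prime_iff_of_mod_four_eq_one (p := 61) (by norm_num) h2).mp hr61
  have hab : IsSquare ((2501 : ℕ) : ZMod q) := by
    have := hs41.mul hs61
    rwa [← Nat.cast_mul] at this
  have hba : IsSquare (q : ZMod 2501) := by
    obtain ⟨r, hr⟩ := hr41
    obtain ⟨s, hs⟩ := hr61
    let f : ZMod (41 * 61) ≃+* ZMod 41 × ZMod 61 := ZMod.chineseRemainder (by norm_num)
    refine ⟨f.symm (r, s), f.injective ?_⟩
    rw [map_mul, f.apply_symm_apply]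
    exact (map_natCast f q).trans (Prod.ext hr hs)
  have hnd41 : ¬ (41 ∣ q) := fun h =>
    h41 ((Nat.prime_dvd_prime_iff_eq (by norm_num) hq).mp h).symm
  have hnd61 : ¬ (61 ∣ q) := fun h =>
    h61 ((Nat.prime_dvd_prime_iff_eq (by norm_num) hq).mp h).symm
  have hcop : Nat.Coprime 2501 q := by
    have : Nat.Coprime (41 * 61) q := Nat.Coprime.mul_left
      ((Nat.Prime.coprime_iff_not_dvd (by norm_num)).mpr hnd41)
      ((Nat.Prime.coprime_iff_not_dvd (by norm_num)).mpr hnd61)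
    exact this
  have hsb : ¬ IsSquare (q : ℤ) := (Nat.prime_iff_prime_int.mp hq).irreducible.not_isSquare
  have hsab : ¬ IsSquare (((2501 : ℕ) : ℤ) * q) := by
    rintro ⟨x, hx⟩
    push_cast at hx
    have p41 : Prime (41 : ℤ) := Nat.prime_iff_prime_int.mp (by norm_num)
    obtain ⟨y, rfl⟩ : (41 : ℤ) ∣ x := by
      have : (41 : ℤ) ∣ x * x := ⟨61 * q, by linarith⟩
      exact (p41.dvd_mul.mp this).elim id id
    have : (41 : ℤ) ∣ 61 * q := ⟨y * y, by linarith⟩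
    apply hnd41
    omega
  have hsa : ¬ IsSquare ((2501 : ℕ) : ℚ) := by
    rw [Rat.isSquare_natCast_iff]
    rintro ⟨x, hx⟩
    have : x < 51 := by nlinarith
    have : 50 < x := by nlinarith
    omega
  have := quatSplit_of_legendre 2501 q hq.pos hsa
    (exists_legendre 2501 q (by norm_num) hq.pos hcop hsb hsab hab hba)
  exact_mod_cast this
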